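/- Let K₁, K₂ be p-adic local fields with K = K₁ ∩ K₂, such that K₁/K and K₂/K are Galois, K₁K₂/K is totally ramified, and each of the extensions K₁/K, K₂/K, K₁K₂/K₂, K₁K₂/K₁ has a unique ramification jump, denoted t₁, t₂, t₁', t₂' respectively. With d_i = [K_i : K], one has d₂(d₁−1)t₁ + (d₂−1)t₂' = d₁(d₂−1)t₂ + (d₁−1)t₁'. -/

import Mathlib

/-- The `ℤ_[p]`-algebra structure on a field `L` over `ℚ_[p]`. -/
noncomputable def padicIntAlgebra (p : ℕ) [Fact p.Prime] (L : Type*) [Field L]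
    [Algebra ℚ_[p] L] : Algebra ℤ_[p] L :=
  ((algebraMap ℚ_[p] L).comp (algebraMap ℤ_[p] ℚ_[p])).toAlgebra

/-- The ring of integers of a `p`-adic field `L`, i.e. the integral closure of `ℤ_[p]` in `L`. -/
noncomputable def ringOfInt (p : ℕ) [Fact p.Prime] (L : Type*) [Field L]
    [Algebra ℚ_[p] L] : Subring L :=
  letI := padicIntAlgebra p L
  (integralClosure ℤ_[p] L).toSubring

/-- The maximal ideal of the ring of integers of `L` (its Jacobson radical). -/
noncomputable def maxIdeal (p : ℕ) [Fact p.Prime] (L : Type*) [Field L]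
    [Algebra ℚ_[p] L] : Ideal (ringOfInt p L) :=
  (⊥ : Ideal (ringOfInt p L)).jacobson

/-- The `i`-th ramification group (in lower numbering) of `L/K`, as a subset of `Gal(L/K)`:
`σ ∈ G_i` iff `σ x - x ∈ 𝔭_L ^ (i+1)` for every `x` in the ring of integers of `L`. -/
noncomputable def ramSet (p : ℕ) [Fact p.Prime] (K L : Type*) [Field K] [Field L]
    [Algebra ℚ_[p] L] [Algebra K L] (i : ℕ) : Set (L ≃ₐ[K] L) :=
  {σ | ∀ x : ringOfInt p L, ∃ y ∈ maxIdeal p L ^ (i + 1), (y : L) = σ (x : L) - (x : L)}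

/-- `t` is a ramification jump of `L/K` if `G_t ≠ G_{t+1}`. -/
noncomputable def IsRamJump (p : ℕ) [Fact p.Prime] (K L : Type*) [Field K] [Field L]
    [Algebra ℚ_[p] L] [Algebra K L] (t : ℕ) : Prop :=
  ramSet p K L t ≠ ramSet p K L (t + 1)

/-- `L/K` has a unique ramification jump, equal to `t`. -/
noncomputable def HasUniqueRamJump (p : ℕ) [Fact p.Prime] (K L : Type*) [Field K] [Field L]
    [Algebra ℚ_[p] L] [Algebra K L] (t : ℕ) : Prop :=
  IsRamJump p K L t ∧ ∀ t', IsRamJump p K L t' → t' = t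

/-- Same as `HasUniqueRamJump`, with the `K`-algebra structure on `L` given by an
explicit ring homomorphism. -/
noncomputable def HasUniqueRamJumpHom (p : ℕ) [Fact p.Prime] (K L : Type*) [Field K] [Field L]
    [Algebra ℚ_[p] L] (f : K →+* L) (t : ℕ) : Prop :=
  letI := f.toAlgebra
  HasUniqueRamJump p K L t

/-- The absolute ramification index `e(L|ℚ_p)`, i.e. the valuation of `p` in `L`. -/
noncomputable def eAbs (p : ℕ) [Fact p.Prime] (L : Type*) [Field L] [Algebra ℚ_[p] L] : ℕ :=
  sSup {n : ℕ | Ideal.span {(p : ringOfInt p L)} ≤ maxIdeal p L ^ n}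

/-- The normalized valuation `v_L(x)` of an integral element `x` of `L`. -/
noncomputable def valInt (p : ℕ) [Fact p.Prime] (L : Type*) [Field L] [Algebra ℚ_[p] L]
    (x : L) : ℕ :=
  sSup {n : ℕ | ∃ y ∈ maxIdeal p L ^ n, (y : L) = x}

section DiscreteValuationRing

open IsLocalRing Polynomial

section Derivative

variable {K L : Type*} [Field K] [Field L] [Algebra K L] [FiniteDimensional K L] [IsGalois K L]

theorem IsGalois.aroots_minpoly_eq_image [DecidableEq L] (x : L) :
    (minpoly K x).aroots L = (Finset.univ.image fun σ : L ≃ₐ[K] L ↦ σ x).val := by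
  have hnodup : ((minpoly K x).aroots L).Nodup :=
    nodup_roots (Polynomial.Separable.map (Algebra.IsSeparable.isSeparable K x))
  refine (Multiset.Nodup.ext hnodup (Finset.nodup _)).mpr fun y ↦ ?_
  rw [← isConjRoot_iff_mem_minpoly_aroots (Algebra.IsIntegral.isIntegral x),
    isConjRoot_iff_exists_algEquiv]
  simp only [Finset.mem_val, Finset.mem_image, Finset.mem_univ, true_and]
  exact ⟨fun ⟨σ, h⟩ ↦ ⟨σ.symm, by rw [← h, σ.symm_apply_apply]⟩,
    fun ⟨σ, h⟩ ↦ ⟨σ.symm, by rw [← h, σ.symm_apply_apply]⟩⟩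

theorem IsGalois.aeval_derivative_minpoly_of_adjoin_eq_top [DecidableEq (L ≃ₐ[K] L)] {x : L}
    (hx : Algebra.adjoin K {x} = ⊤) :
    aeval x (derivative (minpoly K x)) = ∏ σ ∈ Finset.univ.erase (1 : L ≃ₐ[K] L), (x - σ x) := by
  classical
  have hinj : Function.Injective fun σ : L ≃ₐ[K] L ↦ σ x := fun σ τ h ↦
    AlgEquiv.coe_toAlgHom_injective <| AlgHom.ext_of_adjoin_eq_top hx <| by simpa using h
  have hint : IsIntegral K x := Algebra.IsIntegral.isIntegral x
  rw [← eval_map_algebraMap, ← derivative_map,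
    Splits.eval_root_derivative (IsGalois.splits K x) ((minpoly.monic hint).map _)]
  · rw [← aroots_def, aroots_minpoly_eq_image, ← Finset.erase_val]
    have : (Finset.univ.image fun σ : L ≃ₐ[K] L ↦ σ x).erase x =
        (Finset.univ.erase 1).image fun σ : L ≃ₐ[K] L ↦ σ x := by
      rw [Finset.image_erase hinj]; simp
    rw [this]
    exact Finset.prod_image hinj.injOn
  · rw [mem_roots ((minpoly.monic hint).map _).ne_zero]
    simp [IsRoot, eval_map_algebraMap]

end Derivative

variable {A B : Type*} [CommRing A] [IsDomain A] [IsDiscreteValuationRing A]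
  [CommRing B] [IsDomain B] [IsDiscreteValuationRing B] [Algebra A B] [Module.Finite A B]

set_option linter.deprecated false in
theorem exists_map_maximalIdeal_eq_pow (K L : Type*) [Field K] [Field L]
    [Algebra A K] [IsFractionRing A K] [Algebra B L] [IsFractionRing B L] [Algebra K L]
    [Algebra A L] [IsScalarTower A B L] [IsScalarTower A K L] :
    ∃ e f : ℕ, (maximalIdeal A).map (algebraMap A B) = maximalIdeal B ^ e ∧
      e * f = Module.finrank K L ∧
      (f = 1 → ∀ b : B, ∃ a : A, b - algebraMap A B a ∈ maximalIdeal B) := by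
  have hA := IsDiscreteValuationRing.not_a_field A
  have hef := Ideal.ramificationIdx_mul_inertiaDeg_of_isLocalRing (S := B) K L hA
  have := FaithfulSMul.of_field_isFractionRing A B K L
  have hlies : (maximalIdeal B).LiesOver (maximalIdeal A) := inferInstance
  have hmap : (maximalIdeal A).map (algebraMap A B) ≠ ⊥ := by
    rwa [Ne, Ideal.map_eq_bot_iff_of_injective (FaithfulSMul.algebraMap_injective A B)]
  obtain ⟨ϖ, hϖ⟩ := IsDiscreteValuationRing.exists_irreducible B
  obtain ⟨e, he⟩ := IsDiscreteValuationRing.ideal_eq_span_pow_irreducible hmap hϖ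
  rw [← Ideal.span_singleton_pow, ← hϖ.maximalIdeal_eq] at he
  refine ⟨_, _, ?_, hef, fun h b ↦ ?_⟩
  · rw [he, Ideal.ramificationIdx'_spec he.le]
    rw [he, (Ideal.pow_right_strictAnti _ (IsDiscreteValuationRing.not_a_field B)
      (Ideal.IsPrime.ne_top')).le_iff_ge]
    simp
  · let : Field (A ⧸ maximalIdeal A) := Ideal.Quotient.field _
    rw [Ideal.inertiaDeg'_algebraMap] at h
    obtain ⟨a, ha⟩ := (finrank_eq_one_iff_of_nonzero' (1 : B ⧸ maximalIdeal B)
      one_ne_zero).mp h (Ideal.Quotient.mk _ b)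
    obtain ⟨a, rfl⟩ := Ideal.Quotient.mk_surjective a
    refine ⟨a, ?_⟩
    rw [← Ideal.Quotient.eq, ← ha, Algebra.smul_def, mul_one]
    rfl

theorem adjoin_irreducible_eq_top {n : ℕ}
    (hram : maximalIdeal B ^ n ≤ (maximalIdeal A).map (algebraMap A B))
    (hres : ∀ b : B, ∃ a : A, b - algebraMap A B a ∈ maximalIdeal B)
    {ϖ : B} (hϖ : Irreducible ϖ) : Algebra.adjoin A {ϖ} = ⊤ := by
  have key : ∀ k (b : B), ∃ c ∈ Algebra.adjoin A {ϖ}, b - c ∈ maximalIdeal B ^ k := by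
    intro k
    induction k with
    | zero => exact fun b ↦ ⟨0, zero_mem _, by simp⟩
    | succ k ih =>
      intro b
      obtain ⟨a, ha⟩ := hres b
      rw [hϖ.maximalIdeal_eq, Ideal.mem_span_singleton'] at ha
      obtain ⟨b', hb'⟩ := ha
      obtain ⟨c, hc, hbc⟩ := ih b'
      refine ⟨algebraMap A B a + c * ϖ, add_mem (Subalgebra.algebraMap_mem _ a)
        (mul_mem hc (Algebra.self_mem_adjoin_singleton A ϖ)), ?_⟩
      have : b - (algebraMap A B a + c * ϖ) = (b' - c) * ϖ := by linear_combination -hb'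
      rw [this, pow_succ]
      exact Ideal.mul_mem_mul hbc (by rw [mem_maximalIdeal]; exact hϖ.not_isUnit)
  rw [← Algebra.toSubmodule_eq_top, eq_top_iff]
  refine Submodule.le_of_le_smul_of_le_jacobson_bot (Module.finite_def.mp inferInstance)
    (maximalIdeal_le_jacobson ⊥) fun b _ ↦ ?_
  obtain ⟨c, hc, hbc⟩ := key n b
  rw [Ideal.smul_top_eq_map]
  exact Submodule.mem_sup.mpr ⟨c, hc, b - c, hram hbc, by ring⟩

theorem sub_apply_mem_span_of_adjoin_eq_top {R S : Type*} [CommRing R] [CommRing S] [Algebra R S]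
    {x : S} (hx : Algebra.adjoin R {x} = ⊤) (σ : S →ₐ[R] S) (b : S) :
    σ b - b ∈ Ideal.span {σ x - x} := by
  obtain ⟨f, rfl⟩ : ∃ f : R[X], aeval x f = b := by
    have : b ∈ Algebra.adjoin R {x} := hx ▸ Algebra.mem_top
    rwa [Algebra.adjoin_singleton_eq_range_aeval] at this
  rw [Ideal.mem_span_singleton, ← aeval_algHom_apply]
  simp only [aeval_def, eval₂_eq_eval_map]
  exact sub_dvd_eval_sub (σ x) x (f.map (algebraMap R S))

variable {K L : Type*} [Field K] [Field L]
    [Algebra A K] [IsFractionRing A K] [Algebra B L] [IsFractionRing B L] [Algebra K L]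
    [Algebra A L] [IsScalarTower A B L] [IsScalarTower A K L] [IsIntegralClosure B A L]
    [FiniteDimensional K L]

omit [IsDomain A] [IsDiscreteValuationRing A] [Module.Finite A B] [IsFractionRing B L] in
theorem span_sub_galRestrict_eq_pow {t : ℕ}
    (ht : ∀ i, {σ : L ≃ₐ[K] L | ∀ b, galRestrict A K L B σ b - b ∈ maximalIdeal B ^ (i + 1)} ≠
      {σ : L ≃ₐ[K] L | ∀ b, galRestrict A K L B σ b - b ∈ maximalIdeal B ^ (i + 1 + 1)} → i = t)
    (hres : ∀ b : B, ∃ a : A, b - algebraMap A B a ∈ maximalIdeal B)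
    {ϖ : B} (hϖ : Algebra.adjoin A {ϖ} = ⊤) {σ : L ≃ₐ[K] L} (hσ : σ ≠ 1) :
    Ideal.span {ϖ - galRestrict A K L B σ ϖ} = maximalIdeal B ^ (t + 1) := by
  set s := galRestrict A K L B σ with hs
  let G : ℕ → Set (L ≃ₐ[K] L) := fun i ↦
    {σ | ∀ b, galRestrict A K L B σ b - b ∈ maximalIdeal B ^ (i + 1)}
  have hG : ∀ i, i ≠ t → G i = G (i + 1) := fun i hi ↦ not_imp_comm.mp (ht i) hi
  have hG0 : σ ∈ G 0 := by
    intro b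
    obtain ⟨a, ha⟩ := hres b
    have hsa : s (b - algebraMap A B a) ∈ maximalIdeal B := by
      rw [mem_maximalIdeal, mem_nonunits_iff] at ha ⊢
      rwa [MulEquiv.isUnit_map]
    have : s b - b = s (b - algebraMap A B a) - (b - algebraMap A B a) := by
      rw [map_sub, AlgEquiv.commutes]; ring
    rw [zero_add, pow_one]
    change s b - b ∈ _
    rw [this]
    exact sub_mem hsa ha
  have hGt : ∀ i ≤ t, σ ∈ G i := by
    intro i
    induction i with
    | zero => exact fun _ ↦ hG0
    | succ i ih => exact fun h ↦ hG i (by omega) ▸ ih (by omega)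
  have hGt' : σ ∉ G (t + 1) := by
    intro h
    have hall : ∀ i, σ ∈ G (t + 1 + i) := by
      intro i
      induction i with
      | zero => exact h
      | succ i ih => exact hG (t + 1 + i) (by omega) ▸ ih
    apply hσ
    apply (galRestrict A K L B).injective
    rw [map_one]
    ext b
    have : s b - b ∈ (⨅ i : ℕ, maximalIdeal B ^ i : Ideal B) := by
      rw [Submodule.mem_iInf]
      exact fun i ↦ Ideal.pow_le_pow_right (by omega) (hall i b)
    rw [Ideal.iInf_pow_eq_bot_of_isDomain _ Ideal.IsPrime.ne_top'] at this
    exact sub_eq_zero.mp this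
  rw [← neg_sub, Ideal.span_singleton_neg]
  have hne : s ϖ - ϖ ≠ 0 := by
    intro h
    refine hGt' fun b ↦ ?_
    have := sub_apply_mem_span_of_adjoin_eq_top hϖ s.toAlgHom b
    change s b - b ∈ Ideal.span {s ϖ - ϖ} at this
    rw [h, Ideal.span_singleton_eq_bot.mpr rfl, Ideal.mem_bot] at this
    change s b - b ∈ _
    rw [this]
    exact zero_mem _
  obtain ⟨π, hπ⟩ := IsDiscreteValuationRing.exists_irreducible B
  obtain ⟨e, he⟩ := IsDiscreteValuationRing.ideal_eq_span_pow_irreducible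
    (mt Ideal.span_singleton_eq_bot.mp hne) hπ
  rw [← Ideal.span_singleton_pow, ← hπ.maximalIdeal_eq] at he
  have hanti := Ideal.pow_right_strictAnti (maximalIdeal B)
    (IsDiscreteValuationRing.not_a_field B) Ideal.IsPrime.ne_top'
  have h1 : t + 1 ≤ e := by
    refine hanti.le_iff_ge.mp ?_
    rw [← he, Ideal.span_singleton_le_iff_mem]
    exact hGt t le_rfl ϖ
  have h2 : ¬ t + 1 + 1 ≤ e := by
    intro hte
    refine hGt' fun b ↦ Ideal.pow_le_pow_right hte ?_
    rw [← he]
    exact sub_apply_mem_span_of_adjoin_eq_top hϖ s.toAlgHom b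
  rw [he, show e = t + 1 by omega]

/-- The different of a totally ramified Galois extension with a unique ramification jump `t`. -/
theorem differentIdeal_eq_pow_of_unique_jump [IsGalois K L] [Module.IsTorsionFree A B] {t : ℕ}
    (hram : (maximalIdeal A).map (algebraMap A B) = maximalIdeal B ^ Module.finrank K L)
    (ht : ∀ i, {σ : L ≃ₐ[K] L | ∀ b, galRestrict A K L B σ b - b ∈ maximalIdeal B ^ (i + 1)} ≠
      {σ : L ≃ₐ[K] L | ∀ b, galRestrict A K L B σ b - b ∈ maximalIdeal B ^ (i + 1 + 1)} → i = t) :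
    differentIdeal A B = maximalIdeal B ^ ((Module.finrank K L - 1) * (t + 1)) := by
  classical
  have hres : ∀ b : B, ∃ a : A, b - algebraMap A B a ∈ maximalIdeal B := by
    obtain ⟨e, f, he, hef, hf⟩ := exists_map_maximalIdeal_eq_pow (A := A) (B := B) K L
    have h := (Ideal.pow_right_strictAnti (maximalIdeal B)
      (IsDiscreteValuationRing.not_a_field B) Ideal.IsPrime.ne_top').injective (he.symm.trans hram)
    refine hf ?_
    have hpos : 0 < Module.finrank K L := Module.finrank_pos
    rw [h] at hef
    exact (Nat.mul_eq_left hpos.ne').mp hef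
  obtain ⟨ϖ, hϖ⟩ := IsDiscreteValuationRing.exists_irreducible B
  have htop : Algebra.adjoin A {ϖ} = ⊤ := adjoin_irreducible_eq_top hram.ge hres hϖ
  have htopK : Algebra.adjoin K {algebraMap B L ϖ} = ⊤ := by
    rw [eq_top_iff]
    intro x _
    have hB : ∀ b : B, algebraMap B L b ∈ Algebra.adjoin K {algebraMap B L ϖ} := by
      intro b
      have hb : b ∈ Algebra.adjoin A {ϖ} := htop ▸ Algebra.mem_top
      induction hb using Algebra.adjoin_induction with
      | mem y hy =>
        rw [Set.mem_singleton_iff.mp hy]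
        exact Algebra.self_mem_adjoin_singleton K _
      | algebraMap a =>
        rw [← IsScalarTower.algebraMap_apply A B L, IsScalarTower.algebraMap_apply A K L]
        exact Subalgebra.algebraMap_mem _ _
      | add y z _ _ hy hz => rw [map_add]; exact add_mem hy hz
      | mul y z _ _ hy hz => rw [map_mul]; exact mul_mem hy hz
    obtain ⟨b, c, -, rfl⟩ := IsFractionRing.div_surjective (A := B) x
    rw [div_eq_mul_inv]
    exact mul_mem (hB b) (Subalgebra.inv_mem_of_algebraic _ (x := ⟨_, hB c⟩)
      (Algebra.IsAlgebraic.isAlgebraic (R := K) (algebraMap B L c)))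
  have hcond := conductor_mul_differentIdeal A K L ϖ htopK
  rw [conductor_eq_top_of_adjoin_eq_top htop, Ideal.top_mul] at hcond
  have hprod : aeval ϖ (derivative (minpoly A ϖ)) =
      ∏ σ ∈ Finset.univ.erase (1 : L ≃ₐ[K] L), (ϖ - galRestrict A K L B σ ϖ) := by
    apply IsFractionRing.injective B L
    have h := IsGalois.aeval_derivative_minpoly_of_adjoin_eq_top htopK
    rw [minpoly.isIntegrallyClosed_eq_field_fractions (R := A) K L (Algebra.IsIntegral.isIntegral ϖ),
      derivative_map, aeval_map_algebraMap, aeval_algebraMap_apply] at h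
    rw [h, map_prod]
    simp [algebraMap_galRestrict_apply]
  rw [hcond, hprod, ← Ideal.prod_span_singleton,
    Finset.prod_congr rfl fun σ hσ ↦ span_sub_galRestrict_eq_pow ht hres htop
      (Finset.ne_of_mem_erase hσ), Finset.prod_const, ← pow_mul, mul_comm,
    Finset.card_erase_of_mem (Finset.mem_univ _), Finset.card_univ,
    ← Nat.card_eq_fintype_card, IsGalois.card_aut_eq_finrank]

end DiscreteValuationRing
section RingOfInt

open IsLocalRing Polynomial

variable (p : ℕ) [Fact p.Prime] (K L : Type*) [Field K] [Field L] [Algebra ℚ_[p] K]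
  [Algebra ℚ_[p] L] [Algebra K L] [IsScalarTower ℚ_[p] K L]

theorem mem_ringOfInt_iff_isIntegralElem {x : L} : x ∈ ringOfInt p L ↔
    ((algebraMap ℚ_[p] L).comp (algebraMap ℤ_[p] ℚ_[p])).IsIntegralElem x :=
  Iff.rfl

theorem mem_ringOfInt_iff_spectralNorm_le_one [FiniteDimensional ℚ_[p] L] {x : L} :
    x ∈ ringOfInt p L ↔ spectralNorm ℚ_[p] L x ≤ 1 := by
  let := padicIntAlgebra p L
  have : IsScalarTower ℤ_[p] ℚ_[p] L := IsScalarTower.of_algebraMap_eq fun _ ↦ rfl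
  have hx : IsIntegral ℚ_[p] x := Algebra.IsIntegral.isIntegral x
  rw [spectralNorm, spectralValue_le_one_iff (minpoly.monic hx)]
  change IsIntegral ℤ_[p] x ↔ _
  constructor
  · intro h n
    rw [minpoly.isIntegrallyClosed_eq_field_fractions' ℚ_[p] h, coeff_map]
    exact ((minpoly ℤ_[p] x).coeff n).2
  · intro h
    have hlift : minpoly ℚ_[p] x ∈ lifts (algebraMap ℤ_[p] ℚ_[p]) :=
      (lifts_iff_coeff_lifts _).mpr fun n ↦ ⟨⟨_, h n⟩, rfl⟩
    obtain ⟨q, hq, -, hmonic⟩ := lifts_and_natDegree_eq_and_monic hlift (minpoly.monic hx)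
    refine ⟨q, hmonic, ?_⟩
    rw [← aeval_def, ← aeval_map_algebraMap ℚ_[p], hq, minpoly.aeval]

theorem mem_or_inv_mem_ringOfInt [FiniteDimensional ℚ_[p] L] (x : L) :
    x ∈ ringOfInt p L ∨ x⁻¹ ∈ ringOfInt p L := by
  simp only [mem_ringOfInt_iff_spectralNorm_le_one]
  by_cases hx : x = 0
  · left; simp [hx, spectralNorm_zero]
  have h : spectralNorm ℚ_[p] L x * spectralNorm ℚ_[p] L x⁻¹ = 1 := by
    have := map_mul (spectralMulAlgNorm ℚ_[p] L) x x⁻¹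
    rw [mul_inv_cancel₀ hx, map_one] at this
    exact this.symm
  by_contra! hlt
  nlinarith [hlt.1, hlt.2]

instance [FiniteDimensional ℚ_[p] L] : IsLocalRing (ringOfInt p L) :=
  inferInstanceAs (IsLocalRing
    ({ ringOfInt p L with mem_or_inv_mem' := mem_or_inv_mem_ringOfInt p L } : ValuationSubring L))

instance [FiniteDimensional ℚ_[p] L] : IsFractionRing (ringOfInt p L) L :=
  inferInstanceAs (IsFractionRing
    ({ ringOfInt p L with mem_or_inv_mem' := mem_or_inv_mem_ringOfInt p L } : ValuationSubring L) L)

theorem ringOfInt_isDedekindDomain [FiniteDimensional ℚ_[p] L] :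
    IsDedekindDomain (ringOfInt p L) := by
  let := padicIntAlgebra p L
  have : IsScalarTower ℤ_[p] ℚ_[p] L := IsScalarTower.of_algebraMap_eq fun _ ↦ rfl
  exact IsIntegralClosure.isDedekindDomain ℤ_[p] ℚ_[p] L (integralClosure ℤ_[p] L)

theorem not_isUnit_natCast_ringOfInt : ¬ IsUnit (p : ringOfInt p L) := by
  let := padicIntAlgebra p L
  have : IsScalarTower ℤ_[p] ℚ_[p] L := IsScalarTower.of_algebraMap_eq fun _ ↦ rfl
  intro h
  obtain ⟨y, hy⟩ := h.exists_right_inv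
  have hp0 : (p : ℚ_[p]) ≠ 0 := Nat.cast_ne_zero.mpr (Fact.out : p.Prime).ne_zero
  have hyL : (p : L) * (y : L) = 1 := by simpa using congrArg (Subtype.val) hy
  have hyeq : (y : L) = algebraMap ℚ_[p] L (p : ℚ_[p])⁻¹ := by
    rw [map_inv₀, map_natCast]
    exact eq_inv_of_mul_eq_one_right hyL
  have hint : IsIntegral ℤ_[p] (algebraMap ℚ_[p] L (p : ℚ_[p])⁻¹) := hyeq ▸ y.2
  rw [isIntegral_algebraMap_iff (algebraMap ℚ_[p] L).injective] at hint
  obtain ⟨z, hz⟩ := IsIntegrallyClosed.isIntegral_iff.mp hint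
  refine PadicInt.p_nonunit (p := p) ?_
  refine IsUnit.of_mul_eq_one z ?_
  apply IsFractionRing.injective ℤ_[p] ℚ_[p]
  rw [map_mul, hz, map_natCast, map_one, mul_inv_cancel₀ hp0]

theorem natCast_ringOfInt_ne_zero : (p : ringOfInt p L) ≠ 0 := by
  have : CharZero L := charZero_of_injective_algebraMap (algebraMap ℚ_[p] L).injective
  intro h
  have : (p : L) = 0 := by simpa using congrArg Subtype.val h
  exact (Fact.out : p.Prime).ne_zero (Nat.cast_eq_zero.mp this)

instance [FiniteDimensional ℚ_[p] L] : IsDiscreteValuationRing (ringOfInt p L) := by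
  have hded := ringOfInt_isDedekindDomain p L
  have : IsNoetherianRing (ringOfInt p L) := inferInstance
  have hfield : ¬ IsField (ringOfInt p L) := fun h ↦ not_isUnit_natCast_ringOfInt p L <|
    isUnit_iff_exists_inv.mpr (h.mul_inv_cancel (natCast_ringOfInt_ne_zero p L))
  exact ((IsDiscreteValuationRing.TFAE _ hfield).out 0 2).mpr hded

theorem maxIdeal_eq_maximalIdeal [FiniteDimensional ℚ_[p] L] :
    maxIdeal p L = maximalIdeal (ringOfInt p L) :=
  jacobson_eq_maximalIdeal ⊥ bot_ne_top

theorem span_natCast_eq_maximalIdeal_pow [FiniteDimensional ℚ_[p] L] :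
    Ideal.span {(p : ringOfInt p L)} = maximalIdeal (ringOfInt p L) ^ eAbs p L := by
  obtain ⟨π, hπ⟩ := IsDiscreteValuationRing.exists_irreducible (ringOfInt p L)
  obtain ⟨e, he⟩ := IsDiscreteValuationRing.ideal_eq_span_pow_irreducible
    (mt Ideal.span_singleton_eq_bot.mp (natCast_ringOfInt_ne_zero p L)) hπ
  rw [← Ideal.span_singleton_pow, ← hπ.maximalIdeal_eq] at he
  have hanti := Ideal.pow_right_strictAnti (maximalIdeal (ringOfInt p L))
    (IsDiscreteValuationRing.not_a_field _) Ideal.IsPrime.ne_top'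
  rw [eAbs, maxIdeal_eq_maximalIdeal, he]
  simp_rw [hanti.le_iff_ge]
  congr 1
  exact (csSup_Iic (a := e)).symm

theorem eAbs_pos [FiniteDimensional ℚ_[p] L] : 0 < eAbs p L := by
  rw [Nat.pos_iff_ne_zero]
  intro h
  have := span_natCast_eq_maximalIdeal_pow p L
  rw [h, pow_zero, Ideal.one_eq_top, Ideal.span_singleton_eq_top] at this
  exact not_isUnit_natCast_ringOfInt p L this

/-- The map on rings of integers induced by an extension of `p`-adic fields. -/
noncomputable instance ringOfIntAlgebra : Algebra (ringOfInt p K) (ringOfInt p L) :=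
  (((algebraMap K L).comp (ringOfInt p K).subtype).codRestrict (ringOfInt p L) fun x ↦ by
    obtain ⟨f, hf, hx⟩ := (mem_ringOfInt_iff_isIntegralElem p K).mp x.2
    refine ⟨f, hf, ?_⟩
    have := congrArg (algebraMap K L) hx
    rw [hom_eval₂, map_zero, ← RingHom.comp_assoc, ← IsScalarTower.algebraMap_eq] at this
    exact this).toAlgebra

instance : IsScalarTower (ringOfInt p K) (ringOfInt p L) L :=
  IsScalarTower.of_algebraMap_eq fun _ ↦ rfl

instance : IsIntegralClosure (ringOfInt p L) (ringOfInt p K) L where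
  algebraMap_injective := Subtype.val_injective
  isIntegral_iff {x} := by
    let := padicIntAlgebra p L
    let := padicIntAlgebra p K
    have : IsScalarTower ℤ_[p] ℚ_[p] L := IsScalarTower.of_algebraMap_eq fun _ ↦ rfl
    have : IsScalarTower ℤ_[p] ℚ_[p] K := IsScalarTower.of_algebraMap_eq fun _ ↦ rfl
    have : IsScalarTower ℤ_[p] K L := .to₁₃₄ ℤ_[p] ℚ_[p] K L
    let : Algebra ℤ_[p] (ringOfInt p K) := (integralClosure ℤ_[p] K).algebra
    have : Algebra.IsIntegral ℤ_[p] (ringOfInt p K) :=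
      integralClosure.AlgebraIsIntegral
    have : IsScalarTower ℤ_[p] (ringOfInt p K) L :=
      IsScalarTower.of_algebraMap_eq fun x ↦ IsScalarTower.algebraMap_apply ℤ_[p] K L x
    constructor
    · intro h
      exact ⟨⟨x, isIntegral_trans (R := ℤ_[p]) x h⟩, rfl⟩
    · rintro ⟨y, rfl⟩
      exact IsIntegral.tower_top (R := ℤ_[p]) (show IsIntegral ℤ_[p] (y : L) from y.2)

instance [FiniteDimensional ℚ_[p] K] [FiniteDimensional K L] :
    Module.Finite (ringOfInt p K) (ringOfInt p L) := by
  have : CharZero K := charZero_of_injective_algebraMap (algebraMap ℚ_[p] K).injective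
  exact IsIntegralClosure.finite (ringOfInt p K) K L (ringOfInt p L)

instance : FaithfulSMul (ringOfInt p K) (ringOfInt p L) :=
  (faithfulSMul_iff_algebraMap_injective _ _).mpr fun _ _ h ↦
    Subtype.ext <| (algebraMap K L).injective (congrArg Subtype.val h)

theorem exists_map_maximalIdeal_ringOfInt [FiniteDimensional ℚ_[p] K] [FiniteDimensional ℚ_[p] L]
    [FiniteDimensional K L] :
    ∃ e, (maximalIdeal (ringOfInt p K)).map (algebraMap (ringOfInt p K) (ringOfInt p L)) =
      maximalIdeal (ringOfInt p L) ^ e ∧ e ≤ Module.finrank K L ∧ eAbs p L = e * eAbs p K := by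
  obtain ⟨e, f, he, hef, -⟩ :=
    exists_map_maximalIdeal_eq_pow (A := ringOfInt p K) (B := ringOfInt p L) K L
  refine ⟨e, he, ?_, ?_⟩
  · refine Nat.le_of_dvd Module.finrank_pos ⟨f, hef.symm⟩
  · have h := congrArg (Ideal.map (algebraMap (ringOfInt p K) (ringOfInt p L)))
      (span_natCast_eq_maximalIdeal_pow p K)
    rw [Ideal.map_span, Set.image_singleton, map_natCast, span_natCast_eq_maximalIdeal_pow,
      Ideal.map_pow, he, ← pow_mul] at h
    exact (Ideal.pow_right_strictAnti (maximalIdeal (ringOfInt p L))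
      (IsDiscreteValuationRing.not_a_field _) Ideal.IsPrime.ne_top').injective h

theorem map_maximalIdeal_ringOfInt_eq_pow [FiniteDimensional ℚ_[p] K] [FiniteDimensional ℚ_[p] L]
    [FiniteDimensional K L] (h : eAbs p L = Module.finrank K L * eAbs p K) :
    (maximalIdeal (ringOfInt p K)).map (algebraMap (ringOfInt p K) (ringOfInt p L)) =
      maximalIdeal (ringOfInt p L) ^ Module.finrank K L := by
  obtain ⟨e, he, -, habs⟩ := exists_map_maximalIdeal_ringOfInt p K L
  rw [he, Nat.eq_of_mul_eq_mul_right (eAbs_pos p K) (habs.symm.trans h)]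

theorem mem_ramSet_iff [FiniteDimensional ℚ_[p] K] [FiniteDimensional ℚ_[p] L] 
    [FiniteDimensional K L] {i : ℕ}
    {σ : L ≃ₐ[K] L} : σ ∈ ramSet p K L i ↔
      ∀ b, galRestrict (ringOfInt p K) K L (ringOfInt p L) σ b - b ∈
        maximalIdeal (ringOfInt p L) ^ (i + 1) := by
  rw [ramSet, Set.mem_ofPred_eq, maxIdeal_eq_maximalIdeal]
  refine forall_congr' fun x ↦ ?_
  have hx : ((galRestrict (ringOfInt p K) K L (ringOfInt p L) σ x - x : ringOfInt p L) : L) =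
      σ x - x := by
    rw [AddSubgroupClass.coe_sub]
    exact congrArg (· - (x : L)) (algebraMap_galRestrict_apply (ringOfInt p K) σ x)
  constructor
  · rintro ⟨y, hy, h⟩
    rwa [← Subtype.ext (h.trans hx.symm)]
  · exact fun h ↦ ⟨_, h, hx⟩

theorem differentIdeal_ringOfInt_of_hasUniqueRamJump [FiniteDimensional ℚ_[p] K]
    [FiniteDimensional ℚ_[p] L] [FiniteDimensional K L] [IsGalois K L] {t : ℕ}
    (h : eAbs p L = Module.finrank K L * eAbs p K) (ht : HasUniqueRamJump p K L t) :
    differentIdeal (ringOfInt p K) (ringOfInt p L) =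
      maximalIdeal (ringOfInt p L) ^ ((Module.finrank K L - 1) * (t + 1)) := by
  refine differentIdeal_eq_pow_of_unique_jump (K := K) (L := L)
    (map_maximalIdeal_ringOfInt_eq_pow p K L h) fun i hi ↦ ht.2 i fun heq ↦ hi ?_
  simp only [← mem_ramSet_iff]
  exact heq

omit [IsScalarTower ℚ_[p] K L] in
theorem eAbs_eq_of_tower (E : Type*) [Field E] [Algebra ℚ_[p] E] [Algebra K E] [Algebra E L]
    [IsScalarTower ℚ_[p] K E] [IsScalarTower ℚ_[p] E L] [IsScalarTower K E L]
    [FiniteDimensional ℚ_[p] K] [FiniteDimensional ℚ_[p] E] [FiniteDimensional ℚ_[p] L]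
    [FiniteDimensional K E] [FiniteDimensional E L]
    (h : eAbs p L = Module.finrank K L * eAbs p K) :
    eAbs p E = Module.finrank K E * eAbs p K ∧ eAbs p L = Module.finrank E L * eAbs p E := by
  obtain ⟨e₁, -, hle₁, h₁⟩ := exists_map_maximalIdeal_ringOfInt p K E
  obtain ⟨e₂, -, hle₂, h₂⟩ := exists_map_maximalIdeal_ringOfInt p E L
  have hpos₁ : 0 < Module.finrank K E := Module.finrank_pos
  have hpos₂ : 0 < Module.finrank E L := Module.finrank_pos
  have hprod : e₁ * e₂ = Module.finrank K E * Module.finrank E L := by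
    rw [Module.finrank_mul_finrank]
    refine Nat.eq_of_mul_eq_mul_right (eAbs_pos p K) ?_
    rw [← h, h₂, h₁]
    ring
  have he₁ : e₁ = Module.finrank K E := by
    refine le_antisymm hle₁ ?_
    by_contra! hlt
    have := Nat.mul_lt_mul_of_lt_of_le hlt hle₂ hpos₂
    omega
  rw [he₁] at hprod h₁
  exact ⟨h₁, by rwa [← Nat.eq_of_mul_eq_mul_left hpos₁ hprod]⟩

theorem differentIdeal_ringOfInt_of_tower (E : Type*) [Field E] [Algebra ℚ_[p] E] [Algebra K E]
    [Algebra E L] [IsScalarTower ℚ_[p] K E] [IsScalarTower ℚ_[p] E L] [IsScalarTower K E L]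
    [FiniteDimensional ℚ_[p] K] [FiniteDimensional ℚ_[p] E] [FiniteDimensional ℚ_[p] L]
    [FiniteDimensional K E] [FiniteDimensional E L] [FiniteDimensional K L]
    [IsGalois K E] [IsGalois E L] {t t' : ℕ}
    (h : eAbs p L = Module.finrank K L * eAbs p K)
    (ht : HasUniqueRamJump p K E t) (ht' : HasUniqueRamJump p E L t') :
    differentIdeal (ringOfInt p K) (ringOfInt p L) = maximalIdeal (ringOfInt p L) ^
      ((Module.finrank E L - 1) * (t' + 1) +
        Module.finrank E L * ((Module.finrank K E - 1) * (t + 1))) := by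
  obtain ⟨h₁, h₂⟩ := eAbs_eq_of_tower p K L E h
  have : IsScalarTower (ringOfInt p K) (ringOfInt p E) (ringOfInt p L) :=
    IsScalarTower.of_algebraMap_eq fun x ↦
      Subtype.ext (IsScalarTower.algebraMap_apply K E L (x : K))
  have : CharZero K := charZero_of_injective_algebraMap (algebraMap ℚ_[p] K).injective
  have : CharZero (FractionRing (ringOfInt p K)) :=
    charZero_of_injective_ringHom
      (f := (FractionRing.algEquiv (ringOfInt p K) K).symm.toRingEquiv.toRingHom)
      (FractionRing.algEquiv (ringOfInt p K) K).symm.injective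
  let := FractionRing.liftAlgebra (ringOfInt p K) (FractionRing (ringOfInt p L))
  have := FractionRing.isScalarTower_liftAlgebra (ringOfInt p K) (FractionRing (ringOfInt p L))
  have : FiniteDimensional (FractionRing (ringOfInt p K)) (FractionRing (ringOfInt p L)) :=
    .of_isLocalization (ringOfInt p K) (ringOfInt p L) (nonZeroDivisors (ringOfInt p K))
  rw [differentIdeal_eq_differentIdeal_mul_differentIdeal (ringOfInt p K) (ringOfInt p E)
      (ringOfInt p L),
    differentIdeal_ringOfInt_of_hasUniqueRamJump p K E h₁ ht,
    differentIdeal_ringOfInt_of_hasUniqueRamJump p E L h₂ ht', Ideal.map_pow,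
    map_maximalIdeal_ringOfInt_eq_pow p E L h₂, ← pow_mul, ← pow_add]

end RingOfInt

/-- Let `K₁, K₂` be `p`-adic local fields with `K = K₁ ∩ K₂`, `K₁/K` and `K₂/K` Galois,
`K₁K₂/K` totally ramified, and suppose `K₁/K`, `K₂/K`, `K₁K₂/K₂`, `K₁K₂/K₁` have unique
ramification jumps `t₁, t₂, t₁', t₂'` respectively.  With `dᵢ = [Kᵢ : K]` one has
`d₂(d₁-1)t₁ + (d₂-1)t₂' = d₁(d₂-1)t₂ + (d₁-1)t₁'`. -/
theorem different_jump_relation (p : ℕ) [Fact p.Prime] (K M : Type*) [Field K] [Field M]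
    [Algebra ℚ_[p] K] [Algebra ℚ_[p] M] [Algebra K M] [IsScalarTower ℚ_[p] K M]
    [FiniteDimensional ℚ_[p] M]
    (E₁ E₂ : IntermediateField K M)
    (hinf : E₁ ⊓ E₂ = ⊥) (hsup : E₁ ⊔ E₂ = ⊤)
    [IsGalois K ↥E₁] [IsGalois K ↥E₂]
    (htotram : eAbs p M = Module.finrank K M * eAbs p K)
    (d₁ d₂ : ℕ) (hd₁ : Module.finrank K ↥E₁ = d₁) (hd₂ : Module.finrank K ↥E₂ = d₂)
    (t₁ t₂ t₁' t₂' : ℕ)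
    (ht₁ : HasUniqueRamJump p K ↥E₁ t₁) (ht₂ : HasUniqueRamJump p K ↥E₂ t₂)
    (ht₁' : HasUniqueRamJump p ↥E₂ M t₁') (ht₂' : HasUniqueRamJump p ↥E₁ M t₂') :
    d₂ * (d₁ - 1) * t₁ + (d₂ - 1) * t₂' = d₁ * (d₂ - 1) * t₂ + (d₁ - 1) * t₁' := by
  have : FiniteDimensional K M := .right ℚ_[p] K M
  have : FiniteDimensional ℚ_[p] K := .left ℚ_[p] K M
  have hscalar (E : IntermediateField K M) : IsScalarTower ℚ_[p] E M :=
    .of_algebraMap_eq fun _ ↦ rfl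
  have hfinite (E : IntermediateField K M) : FiniteDimensional ℚ_[p] E := .left ℚ_[p] E M
  have hgal : IsGalois K M := by
    have : IsGalois K ↥(E₁ ⊔ E₂) := inferInstance
    rw [hsup] at this
    exact isGalois_iff_isGalois_top.mp this
  have hdisj : E₁.LinearDisjoint E₂ := .of_inf_eq_bot hinf
  have hdeg : Module.finrank K M = d₁ * d₂ := by
    have := hdisj.finrank_sup
    rwa [hsup, IntermediateField.finrank_top', hd₁, hd₂] at this
  have hpos₁ : 0 < d₁ := hd₁ ▸ Module.finrank_pos
  have hpos₂ : 0 < d₂ := hd₂ ▸ Module.finrank_pos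
  have hdeg₁ : Module.finrank E₁ M = d₂ := by
    have := Module.finrank_mul_finrank K E₁ M
    rw [hd₁, hdeg] at this
    exact Nat.eq_of_mul_eq_mul_left hpos₁ this
  have hdeg₂ : Module.finrank E₂ M = d₁ := by
    have := Module.finrank_mul_finrank K E₂ M
    rw [hd₂, hdeg, mul_comm d₁] at this
    exact Nat.eq_of_mul_eq_mul_left hpos₂ this
  have hdiff₁ := differentIdeal_ringOfInt_of_tower p K M E₁ htotram ht₁ ht₂'
  have hdiff₂ := differentIdeal_ringOfInt_of_tower p K M E₂ htotram ht₂ ht₁'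
  have hexp := (Ideal.pow_right_strictAnti (IsLocalRing.maximalIdeal (ringOfInt p M))
    (IsDiscreteValuationRing.not_a_field _) Ideal.IsPrime.ne_top').injective
    (hdiff₁.symm.trans hdiff₂)
  rw [hd₁, hd₂, hdeg₁, hdeg₂] at hexp
  obtain ⟨k₁, rfl⟩ := Nat.exists_eq_add_of_lt hpos₁
  obtain ⟨k₂, rfl⟩ := Nat.exists_eq_add_of_lt hpos₂
  simp only [zero_add, Nat.add_sub_cancel] at hexp ⊢
  linarith
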